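/- Let Y_i be a finite nonempty set, let Y_{−i} be a finite nonempty set, let v : Y_i × Y_{−i} → ℝ, and fix y_i ∈ Y_i. Define h(ỹ_i) = min_{y_{−i} ∈ Y_{−i}} ( v(y_i, y_{−i}) − v(ỹ_i, y_{−i}) ) for ỹ_i ∈ Y_i, and note h(y_i) = 0. Let γ be the Gumbel probability measure on ℝ and let ν be the product measure on Y_i → ℝ whose coordinates are independent copies of γ. Then ν({ e : Y_i → ℝ : for all ỹ_i ∈ Y_i with ỹ_i ≠ y_i and all y_{−i} ∈ Y_{−i}, v(y_i, y_{−i}) + e(y_i) > v(ỹ_i, y_{−i}) + e(ỹ_i) }) = 1 / ∑_{ỹ_i ∈ Y_i} exp(−h(ỹ_i)). That is, the probability that y_i is a strictly dominant strategy equals 1 / ∑_{ỹ_i} exp(−h(ỹ_i)). -/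

import Mathlib

open MeasureTheory Real

lemma gumbel_Ioi (a : ℝ) :
    ∫⁻ x in Set.Ioi a, ENNReal.ofReal (Real.exp (-x - Real.exp (-x)))
      = ENNReal.ofReal (1 - Real.exp (-Real.exp (-a))) := by
  have hd : ∀ x ∈ Set.Ici a, HasDerivAt (fun x : ℝ => Real.exp (-Real.exp (-x)))
      (Real.exp (-x - Real.exp (-x))) x := by
    intro x _
    have h1 : HasDerivAt (fun x : ℝ => Real.exp (-x)) (Real.exp (-x) * (-1)) x :=
      (hasDerivAt_neg x).exp
    refine HasDerivAt.congr_deriv (f := fun x : ℝ => Real.exp (-Real.exp (-x))) h1.neg.exp ?_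
    rw [sub_eq_add_neg, Real.exp_add]
    simp
    ring
  have ht : Filter.Tendsto (fun x : ℝ => Real.exp (-Real.exp (-x))) Filter.atTop (nhds 1) := by
    have h2 : Filter.Tendsto (fun x : ℝ => Real.exp (-x)) Filter.atTop (nhds 0) :=
      Real.tendsto_exp_neg_atTop_nhds_zero
    have h3 := (Real.continuous_exp.tendsto _).comp h2.neg
    simpa [Function.comp_def] using h3
  have hpos : ∀ x ∈ Set.Ioi a, 0 ≤ Real.exp (-x - Real.exp (-x)) := fun x _ => (Real.exp_pos _).le
  have hi := integrableOn_Ioi_deriv_of_nonneg' hd hpos ht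
  have hv := integral_Ioi_of_hasDerivAt_of_nonneg' hd hpos ht
  rw [← hv, ofReal_integral_eq_lintegral_ofReal hi]
  exact Filter.Eventually.of_forall fun x => (Real.exp_pos _).le

lemma gumbel_Iio (γ : Measure ℝ) [IsProbabilityMeasure γ]
    (hγ : γ = volume.withDensity fun x => ENNReal.ofReal (Real.exp (-x - Real.exp (-x))))
    (a : ℝ) : γ (Set.Iio a) = ENNReal.ofReal (Real.exp (-Real.exp (-a))) := by
  have h1 : γ (Set.Ici a) = ENNReal.ofReal (1 - Real.exp (-Real.exp (-a))) := by
    rw [← gumbel_Ioi, hγ, withDensity_apply _ measurableSet_Ici]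
    exact setLIntegral_congr Ioi_ae_eq_Ici.symm
  rw [← Set.compl_Ici, prob_compl_eq_one_sub measurableSet_Ici, h1, ← ENNReal.ofReal_one,
    ← ENNReal.ofReal_sub]
  · congr 1
    ring
  · have : Real.exp (-Real.exp (-a)) ≤ 1 := Real.exp_le_one_iff.2 (by have := Real.exp_pos (-a); linarith)
    linarith

lemma gumbel_scaled (γ : Measure ℝ) [IsProbabilityMeasure γ]
    (hγ : γ = volume.withDensity fun x => ENNReal.ofReal (Real.exp (-x - Real.exp (-x))))
    (S : ℝ) (hS : 0 < S) :
    ∫⁻ x : ℝ, ENNReal.ofReal (Real.exp (-x - S * Real.exp (-x))) = ENNReal.ofReal (1 / S) := by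
  have h1 : ∫⁻ x : ℝ, ENNReal.ofReal (Real.exp (-x - Real.exp (-x))) = 1 := by
    have := measure_univ (μ := γ)
    rwa [hγ, withDensity_apply _ MeasurableSet.univ, Measure.restrict_univ] at this
  rw [← lintegral_add_right_eq_self _ (Real.log S)]
  have h2 : ∀ x : ℝ, ENNReal.ofReal (Real.exp (-(x + Real.log S) - S * Real.exp (-(x + Real.log S))))
      = ENNReal.ofReal (1 / S) * ENNReal.ofReal (Real.exp (-x - Real.exp (-x))) := by
    intro x
    rw [← ENNReal.ofReal_mul (by positivity)]
    congr 1
    have h3 : Real.exp (-(x + Real.log S)) = Real.exp (-x) / S := by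
      rw [neg_add, Real.exp_add, Real.exp_neg (Real.log S), Real.exp_log hS]; rfl
    rw [sub_eq_add_neg, Real.exp_add, sub_eq_add_neg, Real.exp_add, h3,
      mul_div_cancel₀ _ hS.ne']
    ring
  simp_rw [h2]
  rw [lintegral_const_mul _ (by fun_prop), h1, mul_one]

lemma gumbel_race {Yi : Type*} [Fintype Yi] (γ : Measure ℝ) [IsProbabilityMeasure γ]
    (hγ : γ = volume.withDensity fun x => ENNReal.ofReal (Real.exp (-x - Real.exp (-x))))
    (yi : Yi) (h : Yi → ℝ) (h0 : h yi = 0) :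
    Measure.pi (fun _ : Yi => γ) {e : Yi → ℝ | ∀ t, t ≠ yi → e t < e yi + h t}
      = ENNReal.ofReal (1 / ∑ t, Real.exp (-h t)) := by
  classical
  have hmp := measurePreserving_piEquivPiSubtypeProd (fun _ : Yi => γ) (fun t => t = yi)
  let T : Set (({t : Yi // t = yi} → ℝ) × ({t : Yi // ¬ t = yi} → ℝ)) :=
    {p | ∀ t : {t : Yi // ¬ t = yi}, p.2 t < p.1 ⟨yi, rfl⟩ + h t}
  have hT : MeasurableSet T := by
    have : T = ⋂ t : {t : Yi // ¬ t = yi},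
        {p | p.2 t < p.1 ⟨yi, rfl⟩ + h t} := by ext; simp [T]
    rw [this]
    refine MeasurableSet.iInter fun t => measurableSet_lt (by fun_prop) (by fun_prop)
  have hpre : {e : Yi → ℝ | ∀ t, t ≠ yi → e t < e yi + h t}
      = (MeasurableEquiv.piEquivPiSubtypeProd (fun _ : Yi => ℝ) (fun t => t = yi)) ⁻¹' T := by
    ext e
    simp [T, MeasurableEquiv.piEquivPiSubtypeProd, Equiv.piEquivPiSubtypeProd]
  rw [hpre, hmp.measure_preimage hT.nullMeasurableSet, Measure.prod_apply hT]
  have hin : ∀ x : {t : Yi // t = yi} → ℝ,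
      Measure.pi (fun _ : {t : Yi // ¬ t = yi} => γ) (Prod.mk x ⁻¹' T)
        = (fun z : ℝ => ENNReal.ofReal
          (∏ t : {t : Yi // ¬ t = yi}, Real.exp (-Real.exp (-(z + h t))))) (x ⟨yi, rfl⟩) := by
    intro x
    have : Prod.mk x ⁻¹' T = Set.univ.pi
        fun t : {t : Yi // ¬ t = yi} => Set.Iio (x ⟨yi, rfl⟩ + h t) := by
      ext; simp [T]
    rw [this, Measure.pi_pi]
    simp_rw [gumbel_Iio γ hγ]
    rw [ENNReal.ofReal_prod_of_nonneg fun _ _ => (Real.exp_pos _).le]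
  have hm : Measurable (fun z : ℝ => ENNReal.ofReal
          (∏ t : {t : Yi // ¬ t = yi}, Real.exp (-Real.exp (-(z + h t))))) := by fun_prop
  have hev := measurePreserving_eval (fun _ : {t : Yi // t = yi} => γ) ⟨yi, rfl⟩
  rw [lintegral_congr hin]
  have := hev.lintegral_comp hm
  simp only [Function.eval] at this
  trans ∫⁻ z : ℝ, ENNReal.ofReal
          (∏ t : {t : Yi // ¬ t = yi}, Real.exp (-Real.exp (-(z + h t)))) ∂γ
  · convert this
  have hS : 0 < ∑ t, Real.exp (-h t) :=
    Finset.sum_pos (fun _ _ => Real.exp_pos _) ⟨yi, Finset.mem_univ _⟩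
  rw [← gumbel_scaled γ hγ _ hS, hγ, lintegral_withDensity_eq_lintegral_mul _ (by fun_prop) hm]
  refine lintegral_congr fun x => ?_
  simp only [Pi.mul_apply]
  rw [← ENNReal.ofReal_mul (Real.exp_pos _).le, ← Real.exp_sum, ← Real.exp_add]
  congr 2
  have hs : ∑ t, Real.exp (-h t) = 1 + ∑ t : {t : Yi // ¬ t = yi}, Real.exp (-h t) := by
    rw [← Fintype.sum_subtype_add_sum_subtype (fun t => t = yi)]
    simp
    exact h0
  rw [hs, add_mul, Finset.sum_mul, Finset.sum_neg_distrib]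
  have : ∀ t : {t : Yi // ¬ t = yi}, Real.exp (-(x + h t)) = Real.exp (-h t) * Real.exp (-x) := by
    intro t
    rw [← Real.exp_add]; congr 1; ring
  simp_rw [this]
  ring

/-- Under i.i.d. Gumbel own-action shocks, the probability that `y_i` is a strictly dominant
strategy equals `1 / ∑_{ỹ_i} exp (-h(ỹ_i))`, where
`h(ỹ_i) = min_{y_{-i}} (v(y_i, y_{-i}) - v(ỹ_i, y_{-i}))`. -/
theorem dominant_strategy_probability (Yi : Type*) [Fintype Yi] [Nonempty Yi]
    (Ymi : Type*) [Fintype Ymi] [Nonempty Ymi]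
    (v : Yi → Ymi → ℝ) (yi : Yi)
    (γ : Measure ℝ) [IsProbabilityMeasure γ]
    (hγ : γ = volume.withDensity fun x => ENNReal.ofReal (Real.exp (-x - Real.exp (-x)))) :
    Measure.pi (fun _ : Yi => γ)
        {e : Yi → ℝ |
          ∀ tyi : Yi, tyi ≠ yi → ∀ ymi : Ymi,
            v tyi ymi + e tyi < v yi ymi + e yi}
      = ENNReal.ofReal
          (1 /
            ∑ tyi : Yi,
              Real.exp
                (-(Finset.univ.inf' Finset.univ_nonempty fun ymi =>
                    v yi ymi - v tyi ymi))) := by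
  rw [← gumbel_race γ hγ yi (fun t => Finset.univ.inf' Finset.univ_nonempty fun ymi =>
    v yi ymi - v t ymi) (by simp)]
  congr 1
  ext e
  simp only [Set.mem_ofPred_eq]
  refine forall_congr' fun t => imp_congr_right fun _ => ?_
  rw [← sub_lt_iff_lt_add', Finset.lt_inf'_iff]
  simp only [Finset.mem_univ, true_imp_iff]
  refine forall_congr' fun y => ?_
  constructor <;> intro h <;> linarith
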